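/- Assume 0 < ε ≤ 1/15, the Local RIP holds, and ‖𝒜*(e)‖ ≤ εd_0/(10√2·sκ). Then for every (h,x) ∈ 𝒩_d ∩ 𝒩_μ ∩ 𝒩_ε, with δ = ‖ℋ(h,x) − X_0‖_F/d_0: (2/3)δ²d_0² − εδd_0²/(5√s·κ) + ‖e‖² ≤ F(h,x) ≤ (3/2)δ²d_0² + εδd_0²/(5√s·κ) + ‖e‖². -/

import Mathlib

noncomputable section
open Finset ComplexConjugate

namespace RGD

/-- Squared Euclidean norm of a complex vector. -/
def vnormSq {n : ℕ} (v : Fin n → ℂ) : ℝ := ∑ j, ‖v j‖ ^ 2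

/-- Euclidean norm of a complex vector. -/
def vnorm {n : ℕ} (v : Fin n → ℂ) : ℝ := Real.sqrt (vnormSq v)

/-- Inner product, conjugate-linear in the first argument. -/
def vinner {n : ℕ} (u v : Fin n → ℂ) : ℂ := ∑ j, conj (u j) * v j

/-- Squared Frobenius norm of a matrix. -/
def frobSq {K N : ℕ} (Z : Matrix (Fin K) (Fin N) ℂ) : ℝ := ∑ k, ∑ j, ‖Z k j‖ ^ 2

/-- Frobenius norm of a matrix. -/
def frob {K N : ℕ} (Z : Matrix (Fin K) (Fin N) ℂ) : ℝ := Real.sqrt (frobSq Z)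

/-- Frobenius inner product `⟨U,V⟩ = Tr(U*V)`, conjugate-linear in the first argument. -/
def finner {K N : ℕ} (U V : Matrix (Fin K) (Fin N) ℂ) : ℂ := ∑ k, ∑ j, conj (U k j) * V k j

/-- Spectral (operator) norm of a matrix: sup of `‖Zv‖` over the closed unit ball. -/
def opNorm {K N : ℕ} (Z : Matrix (Fin K) (Fin N) ℂ) : ℝ :=
  sSup {r : ℝ | ∃ v : Fin N → ℂ, vnorm v ≤ 1 ∧ r = vnorm (Z.mulVec v)}

/-- Squared Frobenius norm of a block-diagonal matrix, given by its diagonal blocks. -/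
def famFrobSq {K N s : ℕ} (Z : Fin s → Matrix (Fin K) (Fin N) ℂ) : ℝ := ∑ i, frobSq (Z i)

/-- Frobenius norm of a block-diagonal matrix, given by its diagonal blocks. -/
def famFrob {K N s : ℕ} (Z : Fin s → Matrix (Fin K) (Fin N) ℂ) : ℝ := Real.sqrt (famFrobSq Z)

/-- The rank-one matrix `u v*`. -/
def rankOne {K N : ℕ} (u : Fin K → ℂ) (v : Fin N → ℂ) : Matrix (Fin K) (Fin N) ℂ :=
  Matrix.of fun k j => u k * conj (v j)

/-- `ℋ(h,x)`: block-diagonal matrix with `i`-th block `hᵢ xᵢ*`. -/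
def Hmap {K N s : ℕ} (h : Fin s → Fin K → ℂ) (x : Fin s → Fin N → ℂ) :
    Fin s → Matrix (Fin K) (Fin N) ℂ := fun i => rankOne (h i) (x i)

/-- `𝒜ᵢ(Z) = (bₗ* Z aₗ)ₗ`. -/
def calAi {K N L : ℕ} (b : Fin L → Fin K → ℂ) (a : Fin L → Fin N → ℂ)
    (Z : Matrix (Fin K) (Fin N) ℂ) : Fin L → ℂ :=
  fun l => vinner (b l) (Z.mulVec (a l))

/-- `𝒜(Z) = Σᵢ 𝒜ᵢ(Zᵢ)` on block-diagonal matrices. -/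
def calA {K N L s : ℕ} (b : Fin L → Fin K → ℂ) (a : Fin s → Fin L → Fin N → ℂ)
    (Z : Fin s → Matrix (Fin K) (Fin N) ℂ) : Fin L → ℂ :=
  fun l => ∑ i, calAi b (a i) (Z i) l

/-- `𝒜ᵢ*(z) = Σₗ zₗ bₗ aₗ*`. -/
def calAdj {K N L : ℕ} (b : Fin L → Fin K → ℂ) (a : Fin L → Fin N → ℂ)
    (z : Fin L → ℂ) : Matrix (Fin K) (Fin N) ℂ :=
  Matrix.of fun k j => ∑ l, z l * b l k * conj (a l j)

/-- `‖𝒜*(e)‖ = maxᵢ ‖𝒜ᵢ*(e)‖` (operator norms). -/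
def AadjNorm {K N L s : ℕ} (b : Fin L → Fin K → ℂ) (a : Fin s → Fin L → Fin N → ℂ)
    (e : Fin L → ℂ) : ℝ :=
  ⨆ i : Fin s, opNorm (calAdj b (a i) e)

/-- `B*B = I_K`, expressed in terms of the columns `bₗ` of `B*`. -/
def BtBeqI {K L : ℕ} (b : Fin L → Fin K → ℂ) : Prop :=
  ∀ k k' : Fin K, (∑ l, b l k * conj (b l k')) = if k = k' then (1 : ℂ) else 0

/-- `μ ≥ μ_h`, i.e. `√L ‖B h_{i0}‖_∞ ≤ μ ‖h_{i0}‖` for all `i`. -/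
def muhLe {K L s : ℕ} (b : Fin L → Fin K → ℂ) (h0 : Fin s → Fin K → ℂ) (μ : ℝ) : Prop :=
  ∀ i l, Real.sqrt L * ‖vinner (b l) (h0 i)‖ ≤ μ * vnorm (h0 i)

/-- `d₀ = √(Σᵢ d_{i0}²)`. -/
def dtot {s : ℕ} (d0 : Fin s → ℝ) : ℝ := Real.sqrt (∑ i, d0 i ^ 2)

/-- Condition number `κ = (maxᵢ d_{i0}) / (minᵢ d_{i0})`. -/
def kappa {s : ℕ} (d0 : Fin s → ℝ) : ℝ := (⨆ i, d0 i) / (⨅ i, d0 i)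

/-- The observation `y = 𝒜(ℋ(h₀,x₀)) + e`. -/
def yvec {K N L s : ℕ} (b : Fin L → Fin K → ℂ) (a : Fin s → Fin L → Fin N → ℂ)
    (h0 : Fin s → Fin K → ℂ) (x0 : Fin s → Fin N → ℂ) (e : Fin L → ℂ) : Fin L → ℂ :=
  fun l => calA b a (Hmap h0 x0) l + e l

/-- `F(h,x) = ‖𝒜(ℋ(h,x)) − y‖²`. -/
def Fobj {K N L s : ℕ} (b : Fin L → Fin K → ℂ) (a : Fin s → Fin L → Fin N → ℂ)
    (h0 : Fin s → Fin K → ℂ) (x0 : Fin s → Fin N → ℂ) (e : Fin L → ℂ)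
    (h : Fin s → Fin K → ℂ) (x : Fin s → Fin N → ℂ) : ℝ :=
  vnormSq (fun l => calA b a (Hmap h x) l - yvec b a h0 x0 e l)

def G0 (z : ℝ) : ℝ := max (z - 1) 0 ^ 2

def G0' (z : ℝ) : ℝ := 2 * max (z - 1) 0

/-- The `i`-th regularizer `Gᵢ(hᵢ,xᵢ)` (including the factor `ρ`). -/
def Gi {K N L : ℕ} (b : Fin L → Fin K → ℂ) (ρ μ di : ℝ)
    (hi : Fin K → ℂ) (xi : Fin N → ℂ) : ℝ :=
  ρ * (G0 (vnormSq hi / (2 * di)) + G0 (vnormSq xi / (2 * di))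
    + ∑ l, G0 ((L : ℝ) * ‖vinner (b l) hi‖ ^ 2 / (8 * di * μ ^ 2)))

/-- The regularizer `G(h,x) = Σᵢ Gᵢ(hᵢ,xᵢ)`. -/
def Greg {K N L s : ℕ} (b : Fin L → Fin K → ℂ) (ρ μ : ℝ) (dd : Fin s → ℝ)
    (h : Fin s → Fin K → ℂ) (x : Fin s → Fin N → ℂ) : ℝ :=
  ∑ i, Gi b ρ μ (dd i) (h i) (x i)

/-- `F̃ = F + G`. -/
def Ftil {K N L s : ℕ} (b : Fin L → Fin K → ℂ) (a : Fin s → Fin L → Fin N → ℂ)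
    (h0 : Fin s → Fin K → ℂ) (x0 : Fin s → Fin N → ℂ) (e : Fin L → ℂ)
    (ρ μ : ℝ) (dd : Fin s → ℝ)
    (h : Fin s → Fin K → ℂ) (x : Fin s → Fin N → ℂ) : ℝ :=
  Fobj b a h0 x0 e h x + Greg b ρ μ dd h x

/-- The residual `𝒜(ℋ(h,x)) − y`. -/
def residual {K N L s : ℕ} (b : Fin L → Fin K → ℂ) (a : Fin s → Fin L → Fin N → ℂ)
    (h0 : Fin s → Fin K → ℂ) (x0 : Fin s → Fin N → ℂ) (e : Fin L → ℂ)
    (h : Fin s → Fin K → ℂ) (x : Fin s → Fin N → ℂ) : Fin L → ℂ :=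
  fun l => calA b a (Hmap h x) l - yvec b a h0 x0 e l

/-- Wirtinger gradient `∇F_{hᵢ} = 𝒜ᵢ*(𝒜(ℋ(h,x)) − y) xᵢ`. -/
def gradFh {K N L s : ℕ} (b : Fin L → Fin K → ℂ) (a : Fin s → Fin L → Fin N → ℂ)
    (h0 : Fin s → Fin K → ℂ) (x0 : Fin s → Fin N → ℂ) (e : Fin L → ℂ)
    (h : Fin s → Fin K → ℂ) (x : Fin s → Fin N → ℂ) (i : Fin s) : Fin K → ℂ :=
  (calAdj b (a i) (residual b a h0 x0 e h x)).mulVec (x i)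

/-- Wirtinger gradient `∇F_{xᵢ} = (𝒜ᵢ*(𝒜(ℋ(h,x)) − y))* hᵢ`. -/
def gradFx {K N L s : ℕ} (b : Fin L → Fin K → ℂ) (a : Fin s → Fin L → Fin N → ℂ)
    (h0 : Fin s → Fin K → ℂ) (x0 : Fin s → Fin N → ℂ) (e : Fin L → ℂ)
    (h : Fin s → Fin K → ℂ) (x : Fin s → Fin N → ℂ) (i : Fin s) : Fin N → ℂ :=
  (calAdj b (a i) (residual b a h0 x0 e h x)).conjTranspose.mulVec (h i)

/-- Wirtinger gradient `∇G_{hᵢ}`. -/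
def gradGh {K L s : ℕ} (b : Fin L → Fin K → ℂ) (ρ μ : ℝ) (dd : Fin s → ℝ)
    (h : Fin s → Fin K → ℂ) (i : Fin s) : Fin K → ℂ :=
  fun k => ((ρ / (2 * dd i) : ℝ) : ℂ) *
    (((G0' (vnormSq (h i) / (2 * dd i)) : ℝ) : ℂ) * h i k
      + (((L : ℝ) / (4 * μ ^ 2) : ℝ) : ℂ) *
        ∑ l, ((G0' ((L : ℝ) * ‖vinner (b l) (h i)‖ ^ 2 / (8 * dd i * μ ^ 2)) : ℝ) : ℂ)
          * (vinner (b l) (h i) * b l k))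

/-- Wirtinger gradient `∇G_{xᵢ}`. -/
def gradGx {N s : ℕ} (ρ : ℝ) (dd : Fin s → ℝ)
    (x : Fin s → Fin N → ℂ) (i : Fin s) : Fin N → ℂ :=
  fun j => ((ρ / (2 * dd i) : ℝ) : ℂ) * (((G0' (vnormSq (x i) / (2 * dd i)) : ℝ) : ℂ) * x i j)

/-- `∇F̃_{hᵢ} = ∇F_{hᵢ} + ∇G_{hᵢ}`. -/
def gradH {K N L s : ℕ} (b : Fin L → Fin K → ℂ) (a : Fin s → Fin L → Fin N → ℂ)
    (h0 : Fin s → Fin K → ℂ) (x0 : Fin s → Fin N → ℂ) (e : Fin L → ℂ)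
    (ρ μ : ℝ) (dd : Fin s → ℝ)
    (h : Fin s → Fin K → ℂ) (x : Fin s → Fin N → ℂ) (i : Fin s) : Fin K → ℂ :=
  fun k => gradFh b a h0 x0 e h x i k + gradGh b ρ μ dd h i k

/-- `∇F̃_{xᵢ} = ∇F_{xᵢ} + ∇G_{xᵢ}`. -/
def gradX {K N L s : ℕ} (b : Fin L → Fin K → ℂ) (a : Fin s → Fin L → Fin N → ℂ)
    (h0 : Fin s → Fin K → ℂ) (x0 : Fin s → Fin N → ℂ) (e : Fin L → ℂ)
    (ρ μ : ℝ) (dd : Fin s → ℝ)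
    (h : Fin s → Fin K → ℂ) (x : Fin s → Fin N → ℂ) (i : Fin s) : Fin N → ℂ :=
  fun j => gradFx b a h0 x0 e h x i j + gradGx ρ dd x i j

/-- `‖∇F̃(h,x)‖²` (squared norm of the stacked Wirtinger gradient). -/
def gradNormSq {K N L s : ℕ} (b : Fin L → Fin K → ℂ) (a : Fin s → Fin L → Fin N → ℂ)
    (h0 : Fin s → Fin K → ℂ) (x0 : Fin s → Fin N → ℂ) (e : Fin L → ℂ)
    (ρ μ : ℝ) (dd : Fin s → ℝ)
    (h : Fin s → Fin K → ℂ) (x : Fin s → Fin N → ℂ) : ℝ :=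
  ∑ i, vnormSq (gradH b a h0 x0 e ρ μ dd h x i) + ∑ i, vnormSq (gradX b a h0 x0 e ρ μ dd h x i)

/-- `‖∇F̃(h',x') − ∇F̃(h,x)‖²`. -/
def gradDiffNormSq {K N L s : ℕ} (b : Fin L → Fin K → ℂ) (a : Fin s → Fin L → Fin N → ℂ)
    (h0 : Fin s → Fin K → ℂ) (x0 : Fin s → Fin N → ℂ) (e : Fin L → ℂ)
    (ρ μ : ℝ) (dd : Fin s → ℝ)
    (h : Fin s → Fin K → ℂ) (x : Fin s → Fin N → ℂ)
    (h' : Fin s → Fin K → ℂ) (x' : Fin s → Fin N → ℂ) : ℝ :=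
  ∑ i, vnormSq (fun k => gradH b a h0 x0 e ρ μ dd h' x' i k - gradH b a h0 x0 e ρ μ dd h x i k)
  + ∑ i, vnormSq (fun j => gradX b a h0 x0 e ρ μ dd h' x' i j - gradX b a h0 x0 e ρ μ dd h x i j)

/-- Membership in `𝒩_d`. -/
def inNd {K N s : ℕ} (d0 : Fin s → ℝ)
    (h : Fin s → Fin K → ℂ) (x : Fin s → Fin N → ℂ) : Prop :=
  ∀ i, vnorm (h i) ≤ 2 * Real.sqrt (d0 i) ∧ vnorm (x i) ≤ 2 * Real.sqrt (d0 i)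

/-- Membership in `𝒩_μ`. -/
def inNmu {K L s : ℕ} (b : Fin L → Fin K → ℂ) (d0 : Fin s → ℝ) (μ : ℝ)
    (h : Fin s → Fin K → ℂ) : Prop :=
  ∀ i, ∀ l, Real.sqrt L * ‖vinner (b l) (h i)‖ ≤ 4 * Real.sqrt (d0 i) * μ

/-- `δᵢ(hᵢ,xᵢ) = ‖hᵢxᵢ* − h_{i0}x_{i0}*‖_F / d_{i0}`. -/
def deltaI {K N : ℕ} (h0i : Fin K → ℂ) (x0i : Fin N → ℂ) (d0i : ℝ)
    (hi : Fin K → ℂ) (xi : Fin N → ℂ) : ℝ :=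
  frob (rankOne hi xi - rankOne h0i x0i) / d0i

/-- Membership in `𝒩_ε`. -/
def inNeps {K N s : ℕ} (h0 : Fin s → Fin K → ℂ) (x0 : Fin s → Fin N → ℂ)
    (d0 : Fin s → ℝ) (ε : ℝ)
    (h : Fin s → Fin K → ℂ) (x : Fin s → Fin N → ℂ) : Prop :=
  ∀ i, deltaI (h0 i) (x0 i) (d0 i) (h i) (x i) ≤ ε

/-- The global relative error `δ(h,x) = ‖ℋ(h,x) − X₀‖_F / d₀`. -/
def deltaTot {K N s : ℕ} (h0 : Fin s → Fin K → ℂ) (x0 : Fin s → Fin N → ℂ)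
    (d0 : Fin s → ℝ)
    (h : Fin s → Fin K → ℂ) (x : Fin s → Fin N → ℂ) : ℝ :=
  famFrob (fun i => Hmap h x i - Hmap h0 x0 i) / dtot d0

/-- Membership in `𝒩_F̃`. -/
def inNF {K N L s : ℕ} (b : Fin L → Fin K → ℂ) (a : Fin s → Fin L → Fin N → ℂ)
    (h0 : Fin s → Fin K → ℂ) (x0 : Fin s → Fin N → ℂ) (e : Fin L → ℂ)
    (d0 : Fin s → ℝ) (ρ μ : ℝ) (dd : Fin s → ℝ) (ε : ℝ)
    (h : Fin s → Fin K → ℂ) (x : Fin s → Fin N → ℂ) : Prop :=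
  Ftil b a h0 x0 e ρ μ dd h x ≤ ε ^ 2 * dtot d0 ^ 2 / (3 * (s : ℝ) * kappa d0 ^ 2) + vnormSq e

/-- The Local Restricted Isometry Property on `𝒩_d ∩ 𝒩_μ ∩ 𝒩_ε`. -/
def LocalRIP {K N L s : ℕ} (b : Fin L → Fin K → ℂ) (a : Fin s → Fin L → Fin N → ℂ)
    (h0 : Fin s → Fin K → ℂ) (x0 : Fin s → Fin N → ℂ)
    (d0 : Fin s → ℝ) (μ ε : ℝ) : Prop :=
  ∀ (h : Fin s → Fin K → ℂ) (x : Fin s → Fin N → ℂ),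
    inNd d0 h x → inNmu b d0 μ h → inNeps h0 x0 d0 ε h x →
      (2 / 3) * famFrobSq (fun i => Hmap h x i - Hmap h0 x0 i)
          ≤ vnormSq (calA b a fun i => Hmap h x i - Hmap h0 x0 i)
      ∧ vnormSq (calA b a fun i => Hmap h x i - Hmap h0 x0 i)
          ≤ (3 / 2) * famFrobSq (fun i => Hmap h x i - Hmap h0 x0 i)

/-- `α_{i1} = ⟨h_{i0}, hᵢ⟩ / d_{i0}`. -/
def alpha1 {K s : ℕ} (h0 : Fin s → Fin K → ℂ) (d0 : Fin s → ℝ)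
    (h : Fin s → Fin K → ℂ) (i : Fin s) : ℂ :=
  vinner (h0 i) (h i) / ((d0 i : ℝ) : ℂ)

/-- `α_{i2} = ⟨x_{i0}, xᵢ⟩ / d_{i0}`. -/
def alpha2 {N s : ℕ} (x0 : Fin s → Fin N → ℂ) (d0 : Fin s → ℝ)
    (x : Fin s → Fin N → ℂ) (i : Fin s) : ℂ :=
  vinner (x0 i) (x i) / ((d0 i : ℝ) : ℂ)

/-- `δ₀ = δ/10`. -/
def delta0 {K N s : ℕ} (h0 : Fin s → Fin K → ℂ) (x0 : Fin s → Fin N → ℂ)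
    (d0 : Fin s → ℝ) (h : Fin s → Fin K → ℂ) (x : Fin s → Fin N → ℂ) : ℝ :=
  deltaTot h0 x0 d0 h x / 10

/-- `αᵢ = (1−δ₀)α_{i1}` if `‖hᵢ‖ ≥ ‖xᵢ‖`, else `1/((1−δ₀) conj(α_{i2}))`. -/
def alphaC {K N s : ℕ} (h0 : Fin s → Fin K → ℂ) (x0 : Fin s → Fin N → ℂ)
    (d0 : Fin s → ℝ) (h : Fin s → Fin K → ℂ) (x : Fin s → Fin N → ℂ) (i : Fin s) : ℂ :=
  if vnorm (x i) ≤ vnorm (h i)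
  then ((1 - delta0 h0 x0 d0 h x : ℝ) : ℂ) * alpha1 h0 d0 h i
  else 1 / (((1 - delta0 h0 x0 d0 h x : ℝ) : ℂ) * conj (alpha2 x0 d0 x i))

/-- `Δhᵢ = hᵢ − αᵢ h_{i0}`. -/
def dh {K N s : ℕ} (h0 : Fin s → Fin K → ℂ) (x0 : Fin s → Fin N → ℂ)
    (d0 : Fin s → ℝ) (h : Fin s → Fin K → ℂ) (x : Fin s → Fin N → ℂ) (i : Fin s) :
    Fin K → ℂ :=
  fun k => h i k - alphaC h0 x0 d0 h x i * h0 i k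

/-- `Δxᵢ = xᵢ − conj(αᵢ)⁻¹ x_{i0}`. -/
def dx {K N s : ℕ} (h0 : Fin s → Fin K → ℂ) (x0 : Fin s → Fin N → ℂ)
    (d0 : Fin s → ℝ) (h : Fin s → Fin K → ℂ) (x : Fin s → Fin N → ℂ) (i : Fin s) :
    Fin N → ℂ :=
  fun j => x i j - (conj (alphaC h0 x0 d0 h x i))⁻¹ * x0 i j

/-- `σ²_max(h,x) = maxₗ Σᵢ |bₗ*hᵢ|² ‖xᵢ‖²`. -/
def sigmaMaxSq {K N L s : ℕ} (b : Fin L → Fin K → ℂ)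
    (h : Fin s → Fin K → ℂ) (x : Fin s → Fin N → ℂ) : ℝ :=
  ⨆ l : Fin L, ∑ i, ‖vinner (b l) (h i)‖ ^ 2 * vnormSq (x i)

/-- The rank-one bound (Lemma: `𝒜` on block-diagonal matrices with rank-1 blocks). -/
def RankOneBound {K N L s : ℕ} (b : Fin L → Fin K → ℂ)
    (a : Fin s → Fin L → Fin N → ℂ) : Prop :=
  ∀ (h : Fin s → Fin K → ℂ) (x : Fin s → Fin N → ℂ),
    vnormSq (calA b a (Hmap h x)) ≤
      4 / 3 * famFrobSq (Hmap h x)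
      + 2 * Real.sqrt (2 * (s : ℝ) * famFrobSq (Hmap h x) * sigmaMaxSq b h x
          * ((K : ℝ) + N) * Real.log L)
      + 8 * (s : ℝ) * sigmaMaxSq b h x * ((K : ℝ) + N) * Real.log L

/-- The subspace `Tᵢ = {h_{i0} v* + u x_{i0}*}`. -/
def Tspace {K N : ℕ} (h0i : Fin K → ℂ) (x0i : Fin N → ℂ) :
    Set (Matrix (Fin K) (Fin N) ℂ) :=
  {Z | ∃ (u : Fin K → ℂ) (v : Fin N → ℂ), Z = rankOne h0i v + rankOne u x0i}

/-- `P` is the orthogonal projection onto `Tᵢ` w.r.t. the Frobenius inner product. -/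
def IsFrobProj {K N : ℕ} (h0i : Fin K → ℂ) (x0i : Fin N → ℂ)
    (P : Matrix (Fin K) (Fin N) ℂ → Matrix (Fin K) (Fin N) ℂ) : Prop :=
  ∀ Z, P Z ∈ Tspace h0i x0i ∧ ∀ W ∈ Tspace h0i x0i, finner W (Z - P Z) = 0

/-- Operator norm of `𝒜ᵢ` from `(ℂ^{K×N}, ‖·‖_F)` to `(ℂ^L, ‖·‖)`. -/
def calAiOpNorm {K N L : ℕ} (b : Fin L → Fin K → ℂ) (a : Fin L → Fin N → ℂ) : ℝ :=
  sSup {r : ℝ | ∃ Z : Matrix (Fin K) (Fin N) ℂ, frob Z ≤ 1 ∧ r = vnorm (calAi b a Z)}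

/-- Operator norm of `𝒜` from block-diagonal matrices with `‖·‖_F` to `ℂ^L`. -/
def calAOpNorm {K N L s : ℕ} (b : Fin L → Fin K → ℂ)
    (a : Fin s → Fin L → Fin N → ℂ) : ℝ :=
  sSup {r : ℝ | ∃ Z : Fin s → Matrix (Fin K) (Fin N) ℂ, famFrob Z ≤ 1 ∧ r = vnorm (calA b a Z)}

/-- Norm of a stacked vector in `ℂ^{ns}`. -/
def stackNorm {n s : ℕ} (u : Fin s → Fin n → ℂ) : ℝ := Real.sqrt (∑ i, vnormSq (u i))

/-- Norm of a point `z = (h,x) ∈ ℂ^{s(K+N)}`. -/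
def pairNorm {K N s : ℕ} (u : Fin s → Fin K → ℂ) (v : Fin s → Fin N → ℂ) : ℝ :=
  Real.sqrt (∑ i, vnormSq (u i) + ∑ i, vnormSq (v i))

/-- `z + t • w` componentwise, `t` real. -/
def shiftV {n s : ℕ} (u w : Fin s → Fin n → ℂ) (t : ℝ) : Fin s → Fin n → ℂ :=
  fun i k => u i k + (t : ℂ) * w i k

/-- `σ_max(h) = maxₗ √(Σᵢ |bₗ*hᵢ|²)` (unit `xᵢ`'s). -/
def sigmaMaxU {K L s : ℕ} (b : Fin L → Fin K → ℂ) (h : Fin s → Fin K → ℂ) : ℝ :=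
  ⨆ l, Real.sqrt (∑ i, ‖vinner (b l) (h i)‖ ^ 2)

lemma vnormSq_nonneg {n : ℕ} (v : Fin n → ℂ) : 0 ≤ vnormSq v :=
  Finset.sum_nonneg fun _ _ => sq_nonneg _

lemma vnorm_nonneg {n : ℕ} (v : Fin n → ℂ) : 0 ≤ vnorm v := Real.sqrt_nonneg _

lemma vnorm_sq {n : ℕ} (v : Fin n → ℂ) : vnorm v ^ 2 = vnormSq v :=
  Real.sq_sqrt (vnormSq_nonneg v)

lemma frobSq_nonneg {K N : ℕ} (Z : Matrix (Fin K) (Fin N) ℂ) : 0 ≤ frobSq Z :=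
  Finset.sum_nonneg fun _ _ => Finset.sum_nonneg fun _ _ => sq_nonneg _

lemma frob_nonneg {K N : ℕ} (Z : Matrix (Fin K) (Fin N) ℂ) : 0 ≤ frob Z := Real.sqrt_nonneg _

lemma frob_sq {K N : ℕ} (Z : Matrix (Fin K) (Fin N) ℂ) : frob Z ^ 2 = frobSq Z :=
  Real.sq_sqrt (frobSq_nonneg Z)

lemma famFrob_nonneg {K N s : ℕ} (Z : Fin s → Matrix (Fin K) (Fin N) ℂ) : 0 ≤ famFrob Z :=
  Real.sqrt_nonneg _

lemma famFrob_sq {K N s : ℕ} (Z : Fin s → Matrix (Fin K) (Fin N) ℂ) :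
    famFrob Z ^ 2 = famFrobSq Z :=
  Real.sq_sqrt (Finset.sum_nonneg fun i _ => frobSq_nonneg (Z i))

lemma vnorm_eq_norm {n : ℕ} (v : Fin n → ℂ) : vnorm v = ‖WithLp.toLp 2 v‖ := by
  rw [EuclideanSpace.norm_eq]; rfl

lemma vinner_eq_inner {n : ℕ} (u v : Fin n → ℂ) :
    vinner u v = inner ℂ (WithLp.toLp 2 u) (WithLp.toLp 2 v) := by
  simp [vinner, PiLp.inner_apply, mul_comm]

/-- Cauchy–Schwarz. -/
lemma norm_vinner_le {n : ℕ} (u v : Fin n → ℂ) : ‖vinner u v‖ ≤ vnorm u * vnorm v := by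
  rw [vinner_eq_inner, vnorm_eq_norm, vnorm_eq_norm]
  exact norm_inner_le_norm _ _

lemma vinner_self {n : ℕ} (v : Fin n → ℂ) : vinner v v = (vnormSq v : ℂ) := by
  simp [vinner, vnormSq, Complex.conj_mul']

lemma vinner_smul_right {n : ℕ} (c : ℂ) (u v : Fin n → ℂ) :
    vinner u (c • v) = c * vinner u v := by
  simp only [vinner, Finset.mul_sum, Pi.smul_apply, smul_eq_mul]
  exact Finset.sum_congr rfl fun _ _ => by ring

lemma vinner_sub_right {n : ℕ} (u v w : Fin n → ℂ) :
    vinner u (v - w) = vinner u v - vinner u w := by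
  simp [vinner, mul_sub]

lemma conj_vinner {n : ℕ} (u v : Fin n → ℂ) : conj (vinner u v) = vinner v u := by
  simp [vinner, mul_comm]

lemma vnorm_smul {n : ℕ} (c : ℂ) (v : Fin n → ℂ) : vnorm (c • v) = ‖c‖ * vnorm v := by
  rw [vnorm_eq_norm, vnorm_eq_norm, WithLp.toLp_smul, norm_smul]

lemma vnormSq_sub {n : ℕ} (u v : Fin n → ℂ) :
    vnormSq (u - v) = vnormSq u - 2 * (vinner u v).re + vnormSq v := by
  simp only [← vnorm_sq, vnorm_eq_norm, vinner_eq_inner, WithLp.toLp_sub]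
  exact norm_sub_sq (𝕜 := ℂ) _ _

lemma vnormSq_mulVec_le {K N : ℕ} (M : Matrix (Fin K) (Fin N) ℂ) (v : Fin N → ℂ) :
    vnormSq (M.mulVec v) ≤ frobSq M * vnormSq v := by
  unfold frobSq
  rw [Finset.sum_mul]
  refine Finset.sum_le_sum fun k _ => ?_
  have h := norm_vinner_le (fun j => conj (M k j)) v
  have h1 : vinner (fun j => conj (M k j)) v = M.mulVec v k := by
    simp [vinner, Matrix.mulVec, dotProduct]
  have h2 : vnorm (fun j => conj (M k j)) ^ 2 = ∑ j, ‖M k j‖ ^ 2 := by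
    simp [vnorm_sq, vnormSq]
  rw [h1] at h
  calc ‖M.mulVec v k‖ ^ 2 ≤ (vnorm (fun j => conj (M k j)) * vnorm v) ^ 2 := by gcongr
    _ = _ := by rw [mul_pow, h2, vnorm_sq]

lemma vnorm_mulVec_le_opNorm_of_vnorm_le_one {K N : ℕ} (M : Matrix (Fin K) (Fin N) ℂ)
    {v : Fin N → ℂ} (hv : vnorm v ≤ 1) : vnorm (M.mulVec v) ≤ opNorm M := by
  refine le_csSup ⟨frob M, ?_⟩ ⟨v, hv, rfl⟩
  rintro r ⟨w, hw, rfl⟩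
  refine Real.sqrt_le_sqrt ((vnormSq_mulVec_le M w).trans ?_)
  refine mul_le_of_le_one_right (frobSq_nonneg M) ?_
  rw [← vnorm_sq]
  exact pow_le_one₀ (vnorm_nonneg w) hw

lemma opNorm_nonneg {K N : ℕ} (M : Matrix (Fin K) (Fin N) ℂ) : 0 ≤ opNorm M :=
  (vnorm_nonneg _).trans
    (vnorm_mulVec_le_opNorm_of_vnorm_le_one M (v := 0) (by simp [vnorm, vnormSq]))

lemma vnorm_mulVec_le {K N : ℕ} (M : Matrix (Fin K) (Fin N) ℂ) (v : Fin N → ℂ) :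
    vnorm (M.mulVec v) ≤ opNorm M * vnorm v := by
  rcases (vnorm_nonneg v).eq_or_lt with h | h
  · have hv : vnormSq v = 0 := by rw [← vnorm_sq, ← h]; norm_num
    have := vnormSq_mulVec_le M v
    rw [hv, mul_zero] at this
    rw [← h, mul_zero, vnorm, Real.sqrt_eq_zero_of_nonpos this]
  · have hn : ‖((vnorm v)⁻¹ : ℂ)‖ = (vnorm v)⁻¹ := by
      rw [norm_inv, Complex.norm_real, Real.norm_of_nonneg h.le]
    have := vnorm_mulVec_le_opNorm_of_vnorm_le_one M (v := ((vnorm v)⁻¹ : ℂ) • v)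
      (by rw [vnorm_smul, hn, inv_mul_cancel₀ h.ne'])
    rw [Matrix.mulVec_smul, vnorm_smul, hn, inv_mul_le_iff₀ h] at this
    linarith

lemma finner_add_left {K N : ℕ} (U V W : Matrix (Fin K) (Fin N) ℂ) :
    finner (U + V) W = finner U W + finner V W := by
  simp [finner, add_mul, Finset.sum_add_distrib]

lemma finner_self {K N : ℕ} (Z : Matrix (Fin K) (Fin N) ℂ) : finner Z Z = (frobSq Z : ℂ) := by
  simp [finner, frobSq, Complex.conj_mul']

lemma finner_rankOne_left {K N : ℕ} (u : Fin K → ℂ) (v : Fin N → ℂ)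
    (M : Matrix (Fin K) (Fin N) ℂ) : finner (rankOne u v) M = vinner u (M.mulVec v) := by
  simp only [finner, rankOne, vinner, Matrix.mulVec, dotProduct, Matrix.of_apply, map_mul,
    Complex.conj_conj, Finset.mul_sum]
  exact Finset.sum_congr rfl fun _ _ => Finset.sum_congr rfl fun _ _ => by ring

lemma rankOne_mulVec {K N : ℕ} (u : Fin K → ℂ) (v w : Fin N → ℂ) :
    (rankOne u v).mulVec w = vinner v w • u := by
  ext k
  simp only [rankOne, vinner, Matrix.mulVec, dotProduct, Matrix.of_apply, Pi.smul_apply,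
    smul_eq_mul, Finset.sum_mul]
  exact Finset.sum_congr rfl fun _ _ => by ring

lemma frobSq_rankOne_add_of_vinner_eq_zero {K N : ℕ} (u t : Fin K → ℂ) {w q : Fin N → ℂ}
    (hqw : vinner q w = 0) :
    frobSq (rankOne u w + rankOne t q) = vnormSq u * vnormSq w + vnormSq t * vnormSq q := by
  have hwq : vinner w q = 0 := by rw [← conj_vinner, hqw, map_zero]
  have h := finner_self (rankOne u w + rankOne t q)
  rw [finner_add_left, finner_rankOne_left, finner_rankOne_left, Matrix.add_mulVec,
    Matrix.add_mulVec] at h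
  simp only [rankOne_mulVec, hqw, hwq, zero_smul, add_zero, zero_add, vinner_smul_right,
    vinner_self] at h
  have h' : vnormSq w * vnormSq u + vnormSq q * vnormSq t
      = frobSq (rankOne u w + rankOne t q) := by exact_mod_cast h
  linarith

/-- A difference of two rank-one matrices has nuclear norm at most `√2` times its Frobenius norm. -/
lemma norm_finner_rankOne_sub_le {K N : ℕ} (u p : Fin K → ℂ) (v q : Fin N → ℂ)
    (hq : vnormSq q ≠ 0) (M : Matrix (Fin K) (Fin N) ℂ) :
    ‖finner (rankOne u v - rankOne p q) M‖
      ≤ √2 * frob (rankOne u v - rankOne p q) * opNorm M := by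
  set c : ℂ := vinner q v / vnormSq q with hc
  set w : Fin N → ℂ := v - c • q with hw
  set t : Fin K → ℂ := conj c • u - p with ht
  have hqw : vinner q w = 0 := by
    rw [hw, vinner_sub_right, vinner_smul_right, vinner_self, hc,
      div_mul_cancel₀ _ (by exact_mod_cast hq), sub_self]
  have hE : rankOne u v - rankOne p q = rankOne u w + rankOne t q := by
    ext k j
    simp [rankOne, hw, ht]
    ring
  have hF : (vnorm u * vnorm w) ^ 2 + (vnorm t * vnorm q) ^ 2
      = frob (rankOne u w + rankOne t q) ^ 2 := by
    rw [frob_sq, frobSq_rankOne_add_of_vinner_eq_zero u t hqw]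
    simp only [mul_pow, vnorm_sq]
  have hb (y : Fin K → ℂ) (z : Fin N → ℂ) :
      ‖finner (rankOne y z) M‖ ≤ vnorm y * vnorm z * opNorm M := by
    rw [finner_rankOne_left, mul_assoc, mul_comm (vnorm z)]
    exact (norm_vinner_le _ _).trans
      (mul_le_mul_of_nonneg_left (vnorm_mulVec_le M z) (vnorm_nonneg y))
  rw [hE, finner_add_left]
  have hsum : vnorm u * vnorm w + vnorm t * vnorm q
      ≤ √2 * frob (rankOne u w + rankOne t q) := by
    refine le_of_sq_le_sq ?_ (mul_nonneg (Real.sqrt_nonneg _) (frob_nonneg _))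
    rw [mul_pow, Real.sq_sqrt zero_le_two, ← hF]
    exact add_sq_le
  calc _ ≤ _ := norm_add_le _ _
    _ ≤ _ := add_le_add (hb u w) (hb t q)
    _ = (vnorm u * vnorm w + vnorm t * vnorm q) * opNorm M := by ring
    _ ≤ _ := mul_le_mul_of_nonneg_right hsum (opNorm_nonneg M)

lemma vinner_calAi {K N L : ℕ} (b : Fin L → Fin K → ℂ) (a : Fin L → Fin N → ℂ)
    (Z : Matrix (Fin K) (Fin N) ℂ) (e : Fin L → ℂ) :
    vinner (calAi b a Z) e = finner Z (calAdj b a e) := by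
  simp only [vinner, calAi, finner, calAdj, Matrix.mulVec, dotProduct, Matrix.of_apply, map_sum,
    map_mul, Complex.conj_conj, Finset.mul_sum, Finset.sum_mul]
  rw [Finset.sum_comm]
  refine Finset.sum_congr rfl fun k _ => ?_
  rw [Finset.sum_comm]
  exact Finset.sum_congr rfl fun _ _ => Finset.sum_congr rfl fun _ _ => by ring

lemma vinner_calA {K N L s : ℕ} (b : Fin L → Fin K → ℂ) (a : Fin s → Fin L → Fin N → ℂ)
    (Z : Fin s → Matrix (Fin K) (Fin N) ℂ) (e : Fin L → ℂ) :
    vinner (calA b a Z) e = ∑ i, finner (Z i) (calAdj b (a i) e) := by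
  simp only [← vinner_calAi]
  simp only [vinner, calA, map_sum, Finset.sum_mul]
  exact Finset.sum_comm

lemma calA_sub {K N L s : ℕ} (b : Fin L → Fin K → ℂ) (a : Fin s → Fin L → Fin N → ℂ)
    (Z W : Fin s → Matrix (Fin K) (Fin N) ℂ) :
    (calA b a fun i => Z i - W i) = calA b a Z - calA b a W := by
  ext l
  simp [calA, calAi, Matrix.sub_mulVec, vinner_sub_right]

lemma opNorm_calAdj_le_AadjNorm {K N L s : ℕ} (b : Fin L → Fin K → ℂ)
    (a : Fin s → Fin L → Fin N → ℂ) (e : Fin L → ℂ) (i : Fin s) :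
    opNorm (calAdj b (a i) e) ≤ AadjNorm b a e :=
  le_ciSup (f := fun i => opNorm (calAdj b (a i) e)) (Set.finite_range _).bddAbove i

lemma sum_frob_le {K N s : ℕ} (Z : Fin s → Matrix (Fin K) (Fin N) ℂ) :
    ∑ i, frob (Z i) ≤ √s * famFrob Z := by
  refine le_of_sq_le_sq ?_ (mul_nonneg (Real.sqrt_nonneg _) (famFrob_nonneg Z))
  rw [mul_pow, Real.sq_sqrt (Nat.cast_nonneg s), famFrob_sq]
  have := sq_sum_le_card_mul_sum_sq (s := Finset.univ) (f := fun i => frob (Z i))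
  simpa [famFrobSq, frob_sq] using this

lemma Fobj_eq {K N L s : ℕ} (b : Fin L → Fin K → ℂ) (a : Fin s → Fin L → Fin N → ℂ)
    (h0 : Fin s → Fin K → ℂ) (x0 : Fin s → Fin N → ℂ) (e : Fin L → ℂ)
    (h : Fin s → Fin K → ℂ) (x : Fin s → Fin N → ℂ) :
    Fobj b a h0 x0 e h x
      = vnormSq (calA b a fun i => Hmap h x i - Hmap h0 x0 i)
        - 2 * (vinner (calA b a fun i => Hmap h x i - Hmap h0 x0 i) e).re + vnormSq e := by
  rw [← vnormSq_sub, calA_sub]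
  unfold Fobj yvec
  congr 1
  ext l
  simp [sub_sub]

lemma norm_vinner_calA_Hmap_sub_le {K N L s : ℕ} (b : Fin L → Fin K → ℂ)
    (a : Fin s → Fin L → Fin N → ℂ) (h0 : Fin s → Fin K → ℂ) (x0 : Fin s → Fin N → ℂ)
    (hx0 : ∀ i, vnormSq (x0 i) ≠ 0) (e : Fin L → ℂ)
    (h : Fin s → Fin K → ℂ) (x : Fin s → Fin N → ℂ) :
    ‖vinner (calA b a fun i => Hmap h x i - Hmap h0 x0 i) e‖
      ≤ √2 * √s * famFrob (fun i => Hmap h x i - Hmap h0 x0 i) * AadjNorm b a e := by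
  have hA : 0 ≤ AadjNorm b a e := Real.iSup_nonneg fun i => opNorm_nonneg _
  rw [vinner_calA]
  calc _ ≤ _ := norm_sum_le _ _
    _ ≤ ∑ i, √2 * frob (Hmap h x i - Hmap h0 x0 i) * AadjNorm b a e :=
        Finset.sum_le_sum fun i _ =>
          (norm_finner_rankOne_sub_le _ _ _ _ (hx0 i) _).trans
            (mul_le_mul_of_nonneg_left (opNorm_calAdj_le_AadjNorm b a e i)
              (mul_nonneg (Real.sqrt_nonneg _) (frob_nonneg _)))
    _ = √2 * (∑ i, frob (Hmap h x i - Hmap h0 x0 i)) * AadjNorm b a e := by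
        rw [← Finset.sum_mul, ← Finset.mul_sum]
    _ ≤ _ := by
        rw [mul_assoc (√2) (√s)]
        gcongr
        exact sum_frob_le _

/-- two-sided bound on `F` over `𝒩_d ∩ 𝒩_μ ∩ 𝒩_ε`. -/
theorem statement6
    {K N L s : ℕ} (hK : 0 < K) (hN : 0 < N) (hL : 0 < L) (hs : 0 < s)
    (b : Fin L → Fin K → ℂ) (hb : BtBeqI b)
    (a : Fin s → Fin L → Fin N → ℂ)
    (h0 : Fin s → Fin K → ℂ) (x0 : Fin s → Fin N → ℂ)
    (d0 : Fin s → ℝ) (hd0 : ∀ i, 0 < d0 i)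
    (hh0 : ∀ i, vnorm (h0 i) = Real.sqrt (d0 i))
    (hx0 : ∀ i, vnorm (x0 i) = Real.sqrt (d0 i))
    (e : Fin L → ℂ) (μ ε : ℝ)
    (hμ : 0 < μ) (hε : 0 < ε) (hε15 : ε ≤ 1 / 15)
    (hRIP : LocalRIP b a h0 x0 d0 μ ε)
    (hAe : AadjNorm b a e ≤ ε * dtot d0 / (10 * Real.sqrt 2 * (s : ℝ) * kappa d0)) :
    ∀ (h : Fin s → Fin K → ℂ) (x : Fin s → Fin N → ℂ),
      inNd d0 h x → inNmu b d0 μ h → inNeps h0 x0 d0 ε h x →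
      2 / 3 * deltaTot h0 x0 d0 h x ^ 2 * dtot d0 ^ 2
          - ε * deltaTot h0 x0 d0 h x * dtot d0 ^ 2 / (5 * Real.sqrt s * kappa d0)
          + vnormSq e
        ≤ Fobj b a h0 x0 e h x
      ∧ Fobj b a h0 x0 e h x
        ≤ 3 / 2 * deltaTot h0 x0 d0 h x ^ 2 * dtot d0 ^ 2
          + ε * deltaTot h0 x0 d0 h x * dtot d0 ^ 2 / (5 * Real.sqrt s * kappa d0)
          + vnormSq e := by
  intro h x hNd hNmu hNeps
  have hx0' (i : Fin s) : vnormSq (x0 i) ≠ 0 := by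
    rw [← vnorm_sq, hx0, Real.sq_sqrt (hd0 i).le]
    exact (hd0 i).ne'
  have hdtot : 0 < dtot d0 :=
    Real.sqrt_pos.2 (Finset.sum_pos (fun i _ => pow_pos (hd0 i) 2) ⟨⟨0, hs⟩, Finset.mem_univ _⟩)
  set E := fun i => Hmap h x i - Hmap h0 x0 i with hE
  have hδ : deltaTot h0 x0 d0 h x * dtot d0 = famFrob E := div_mul_cancel₀ _ hdtot.ne'
  have hδ2 : deltaTot h0 x0 d0 h x ^ 2 * dtot d0 ^ 2 = famFrobSq E := by
    rw [← mul_pow, hδ, famFrob_sq]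
  obtain ⟨hlow, hup⟩ := hRIP h x hNd hNmu hNeps
  have hcross : ‖vinner (calA b a E) e‖
      ≤ √2 * √s * famFrob E * (ε * dtot d0 / (10 * √2 * (s : ℝ) * kappa d0)) :=
    (norm_vinner_calA_Hmap_sub_le b a h0 x0 hx0' e h x).trans
      (mul_le_mul_of_nonneg_left hAe (mul_nonneg (by positivity) (famFrob_nonneg E)))
  have hbound : 2 * (√2 * √s * famFrob E * (ε * dtot d0 / (10 * √2 * (s : ℝ) * kappa d0)))
      = ε * deltaTot h0 x0 d0 h x * dtot d0 ^ 2 / (5 * √s * kappa d0) := by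
    have hs' : (0 : ℝ) < √s := Real.sqrt_pos.2 (by exact_mod_cast hs)
    have h2 : (0 : ℝ) < √2 := by positivity
    rw [← hδ]
    rcases eq_or_ne (kappa d0) 0 with hk | hk
    · simp [hk]
    · field_simp
      linear_combination 10 * deltaTot h0 x0 d0 h x * Real.sq_sqrt (Nat.cast_nonneg (α := ℝ) s)
  have hre := abs_le.1 ((Complex.abs_re_le_norm (vinner (calA b a E) e)).trans hcross)
  rw [Fobj_eq, mul_assoc (2 / 3 : ℝ), mul_assoc (3 / 2 : ℝ), hδ2, ← hbound]
  constructor <;> linarith [hre.1, hre.2]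

end RGD
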